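/- Consider the car model with steering dynamics: ẋ = cos(θ₂ − θ₁)cos(θ₁)u₁, ẏ = cos(θ₂ − θ₁)sin(θ₁)u₁, θ̇₁ = sin(θ₂ − θ₁)u₁, θ̇₂ = ω₂, ω̇₂ = u₂, on the open domain where cos(θ₁) ≠ 0 and cos(θ₂ − θ₁) ≠ 0, with controls (u₁, u₂). Define z₁ = x, z₂ = y, z₃ = tan(θ₁), z₄ = tan(θ₂ − θ₁)/cos³(θ₁), and v₁ = cos(θ₂ − θ₁)cos(θ₁)u₁. Then along every trajectory: ż₁ = v₁, ż₂ = z₃v₁, ż₃ = z₄v₁, and there exist smooth functions a₁ (of three variables) and a₂ (of two variables) such that ż₄ = a₁(z₃, z₄, ω₂) + a₂(z₃, z₄)v₁. Hence, after introducing z₅ = a₁(z₃, z₄, ω₂) and a suitable invertible static feedback, the system takes the normal form NF″₉ compatible with the minimal x-flat output φ = (x, y) = (z₁, z₂). -/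

import Mathlib

/-!
Formalization framework for two-input control-affine systems
`ẋ = f(x) + u₁g₁(x) + u₂g₂(x)` on open subsets of ℝⁿ, flatness,
x-flatness, differential weight, static feedback equivalence,
static feedback linearization and linearization via prolongations,
following Nicolau–Gstöttner–Respondek, "Normal forms for x-flat
two-input control-affine systems in dimension five".
-/

noncomputable section

namespace ControlAffine

/-- A control-affine system `ẋ = f(x) + Σᵢ uᵢ gᵢ(x)` with `n` states and `m` controls. -/
structure CAS (n m : ℕ) where
  f : (Fin n → ℝ) → (Fin n → ℝ)
  g : Fin m → (Fin n → ℝ) → (Fin n → ℝ)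

variable {n m : ℕ}

/-- The control-dependent vector field `f(x) + Σᵢ uᵢ gᵢ(x)`. -/
def CAS.vf (S : CAS n m) (x : Fin n → ℝ) (u : Fin m → ℝ) : Fin n → ℝ :=
  S.f x + ∑ i, u i • S.g i x

/-- Smoothness of the defining vector fields on a set `X`. -/
def CAS.SmoothOn (S : CAS n m) (X : Set (Fin n → ℝ)) : Prop :=
  ContDiffOn ℝ (⊤ : ℕ∞) S.f X ∧ ∀ i, ContDiffOn ℝ (⊤ : ℕ∞) (S.g i) X

/-- `(x, u)` is a trajectory of `S` remaining in `X`. -/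
def CAS.IsTrajOn (S : CAS n m) (X : Set (Fin n → ℝ))
    (x : ℝ → Fin n → ℝ) (u : ℝ → Fin m → ℝ) : Prop :=
  (∀ t, x t ∈ X) ∧ ∀ t, HasDerivAt x (S.vf (x t) (u t)) t

/-- The `L`-jet `(u, u̇, …, u^{(L-1)})` of a control at time `t`
(`L = 0` corresponds to `l = -1`, i.e. no control derivatives at all). -/
def ujet (L : ℕ) (u : ℝ → Fin m → ℝ) (t : ℝ) : Fin L → Fin m → ℝ :=
  fun k => iteratedDeriv k u t

/-- `φ`, a function of the state only, is an x-flat output of `S` at the point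
`(x₀, ubar₀)` (a state together with an `L`-jet of controls): there are a
neighborhood `O` of that point, and smooth maps `γ`, `δ` reconstructing the state
from the derivatives `φᵢ, φ̇ᵢ, …, φᵢ^{(sᵢ-1)}` and the control from
`φᵢ, φ̇ᵢ, …, φᵢ^{(sᵢ)}` along every smooth trajectory remaining over `O`. -/
def IsXFlatOutputAt (S : CAS n m) (X : Set (Fin n → ℝ)) (L : ℕ)
    (x₀ : Fin n → ℝ) (ubar₀ : Fin L → Fin m → ℝ)
    (φ : (Fin n → ℝ) → Fin m → ℝ) (s : Fin m → ℕ) : Prop :=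
  ∃ (O : Set ((Fin n → ℝ) × (Fin L → Fin m → ℝ)))
    (γ : ((i : Fin m) → Fin (s i) → ℝ) → Fin n → ℝ)
    (δ : ((i : Fin m) → Fin (s i + 1) → ℝ) → Fin m → ℝ),
    IsOpen O ∧ (x₀, ubar₀) ∈ O ∧ (∀ q ∈ O, Prod.fst q ∈ X) ∧
    ContDiff ℝ (⊤ : ℕ∞) γ ∧ ContDiff ℝ (⊤ : ℕ∞) δ ∧
    ∀ (x : ℝ → Fin n → ℝ) (u : ℝ → Fin m → ℝ), ContDiff ℝ (⊤ : ℕ∞) u →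
      S.IsTrajOn X x u → (∀ t, (x t, ujet L u t) ∈ O) →
      ∀ t, x t = γ (fun i k => iteratedDeriv k (fun τ => φ (x τ) i) t) ∧
           u t = δ (fun i k => iteratedDeriv k (fun τ => φ (x τ) i) t)

/-- `S` is x-flat at the point `(x₀, ubar₀)`. -/
def IsXFlatAt (S : CAS n m) (X : Set (Fin n → ℝ)) (L : ℕ)
    (x₀ : Fin n → ℝ) (ubar₀ : Fin L → Fin m → ℝ) : Prop :=
  ∃ (φ : (Fin n → ℝ) → Fin m → ℝ) (s : Fin m → ℕ),
    ContDiff ℝ (⊤ : ℕ∞) φ ∧ IsXFlatOutputAt S X L x₀ ubar₀ φ s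

/-- `S` is x-flat at `(x₀, ubar₀)` with an x-flat output of differential weight
`∑ᵢ (sᵢ + 1) = m + ∑ᵢ sᵢ` at most `w`. -/
def XFlatWeightLE (S : CAS n m) (X : Set (Fin n → ℝ)) (L : ℕ)
    (x₀ : Fin n → ℝ) (ubar₀ : Fin L → Fin m → ℝ) (w : ℕ) : Prop :=
  ∃ (φ : (Fin n → ℝ) → Fin m → ℝ) (s : Fin m → ℕ),
    ContDiff ℝ (⊤ : ℕ∞) φ ∧ IsXFlatOutputAt S X L x₀ ubar₀ φ s ∧
    ∑ i, (s i + 1) ≤ w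

/-- Local static feedback equivalence of `S` (around `x₀`, within `X`) and `S'`
(around `z₀`), via a local diffeomorphism `z = ψ(x)` and an invertible static
feedback `u = α(x) + β(x)v`; the additional predicate `P` allows to record
extra compatibility properties of the normalizing diffeomorphism `ψ`. -/
def LocallySFEThrough (S S' : CAS n m) (X : Set (Fin n → ℝ)) (x₀ z₀ : Fin n → ℝ)
    (P : Set (Fin n → ℝ) → ((Fin n → ℝ) → Fin n → ℝ) → Prop) : Prop :=
  ∃ (U : Set (Fin n → ℝ)) (ψ ψinv : (Fin n → ℝ) → Fin n → ℝ)
    (α : (Fin n → ℝ) → Fin m → ℝ) (β : (Fin n → ℝ) → Fin m → Fin m → ℝ),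
    IsOpen U ∧ x₀ ∈ U ∧ U ⊆ X ∧ ψ x₀ = z₀ ∧
    ContDiffOn ℝ (⊤ : ℕ∞) ψ U ∧ IsOpen (ψ '' U) ∧
    ContDiffOn ℝ (⊤ : ℕ∞) ψinv (ψ '' U) ∧ (∀ x ∈ U, ψinv (ψ x) = x) ∧
    ContDiffOn ℝ (⊤ : ℕ∞) α U ∧ ContDiffOn ℝ (⊤ : ℕ∞) (fun x => β x) U ∧
    (∀ x ∈ U, (Matrix.of (β x)).det ≠ 0) ∧
    (∀ x ∈ U, ∀ v : Fin m → ℝ,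
      fderiv ℝ ψ x (S.vf x fun i => α x i + ∑ j, β x i j * v j) = S'.vf (ψ x) v) ∧
    P U ψ

/-- Local static feedback equivalence of `S` around `x₀` and `S'` around `z₀`. -/
def LocallySFE (S S' : CAS n m) (X : Set (Fin n → ℝ)) (x₀ z₀ : Fin n → ℝ) : Prop :=
  LocallySFEThrough S S' X x₀ z₀ fun _ _ => True

/-- `S` is a linear controllable system `ż = Az + Bv` (Kalman rank condition). -/
def IsLinearControllable (S : CAS n m) : Prop :=
  ∃ (A : Matrix (Fin n) (Fin n) ℝ) (B : Matrix (Fin n) (Fin m) ℝ),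
    (∀ x, S.f x = A.mulVec x) ∧ (∀ j x, S.g j x = fun i => B i j) ∧
    Submodule.span ℝ
      {w : Fin n → ℝ | ∃ (k : ℕ) (j : Fin m), w = (A ^ k).mulVec fun i => B i j} = ⊤

/-- `S` is locally static feedback linearizable around `x₀` (within `X`). -/
def SFLinAt (S : CAS n m) (X : Set (Fin n → ℝ)) (x₀ : Fin n → ℝ) : Prop :=
  ∃ (S' : CAS n m) (z₀ : Fin n → ℝ), IsLinearControllable S' ∧ LocallySFE S S' X x₀ z₀

/-- The system obtained from `S` by the invertible static feedback
`u = α(x) + β(x)ũ`, i.e. `f̃ = f + gα`, `g̃ = gβ`. -/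
def feedback (S : CAS n m) (α : (Fin n → ℝ) → Fin m → ℝ)
    (β : (Fin n → ℝ) → Fin m → Fin m → ℝ) : CAS n m where
  f x := S.vf x (α x)
  g i x := ∑ j, β x j i • S.g j x

/-- The prolonged system `Σ^{(p,0)}`: the first control is replaced by a chain of
`p` integrators `ẏ₁ = y₂, …, ẏ_p = v₁` feeding `g₁`, the second control is kept;
for `p = 0` this is the system itself. -/
def prolong (S : CAS n 2) (p : ℕ) : CAS (n + p) 2 where
  f z :=
    Fin.append
      (fun i => S.f (fun i' => z (Fin.castAdd p i')) i +
        (if h : 0 < p then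
          z (Fin.natAdd n ⟨0, h⟩) * S.g 0 (fun i' => z (Fin.castAdd p i')) i
        else 0))
      (fun j : Fin p =>
        if h : (j : ℕ) + 1 < p then z (Fin.natAdd n ⟨(j : ℕ) + 1, h⟩) else 0)
  g c :=
    if c = 0 then fun z =>
      Fin.append
        (fun i => if 0 < p then 0 else S.g 0 (fun i' => z (Fin.castAdd p i')) i)
        (fun j : Fin p => if (j : ℕ) + 1 = p then 1 else 0)
    else fun z =>
      Fin.append
        (fun i => S.g 1 (fun i' => z (Fin.castAdd p i')) i)
        (fun _ : Fin p => 0)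

/-- The cylinder `X × ℝᵖ` over a set of states, as a set of prolonged states. -/
def cylinder (X : Set (Fin n → ℝ)) (p : ℕ) : Set (Fin (n + p) → ℝ) :=
  {z | (fun i => z (Fin.castAdd p i)) ∈ X}

/-- `S` is dynamically linearizable, around `x₀`, via an invertible `p`-fold
prolongation: an invertible static feedback `u = α(x) + β(x)ũ` (defined near `x₀`)
brings `S` to a system whose `p`-fold prolongation of the first control is locally
static feedback linearizable. -/
def DynLinProlongAt (S : CAS n 2) (X : Set (Fin n → ℝ)) (x₀ : Fin n → ℝ)
    (p : ℕ) : Prop :=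
  ∃ (α : (Fin n → ℝ) → Fin 2 → ℝ) (β : (Fin n → ℝ) → Fin 2 → Fin 2 → ℝ)
    (U : Set (Fin n → ℝ)) (y₀ : Fin p → ℝ),
    IsOpen U ∧ x₀ ∈ U ∧ U ⊆ X ∧
    ContDiffOn ℝ (⊤ : ℕ∞) α U ∧ ContDiffOn ℝ (⊤ : ℕ∞) (fun x => β x) U ∧
    (∀ x ∈ U, (Matrix.of (β x)).det ≠ 0) ∧
    SFLinAt (prolong (feedback S α β) p) (cylinder U p) (Fin.append x₀ y₀)

/-- Lie bracket of two vector fields on ℝⁿ. -/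
def lieBracket (f g : (Fin n → ℝ) → Fin n → ℝ) (x : Fin n → ℝ) : Fin n → ℝ :=
  fderiv ℝ g x (f x) - fderiv ℝ f x (g x)

/-- Generators of the distributions `D⁰ = span{g₁,…,g_m}`,
`D^{j+1} = D^j + [f, D^j]`. -/
def distGens (S : CAS n m) : ℕ → Set ((Fin n → ℝ) → Fin n → ℝ)
  | 0 => Set.range S.g
  | j + 1 => distGens S j ∪ lieBracket S.f '' distGens S j

/-- Assumption (A): all the ranks involved (of the distributions
`D⁰ ⊂ D¹ ⊂ D² ⊂ …`) are constant around the given point. -/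
def AssumptionA (S : CAS n m) (x₀ : Fin n → ℝ) : Prop :=
  ∀ j : ℕ, ∃ (r : ℕ) (U : Set (Fin n → ℝ)), IsOpen U ∧ x₀ ∈ U ∧
    ∀ x ∈ U, Module.finrank ℝ
      (Submodule.span ℝ {w : Fin n → ℝ | ∃ h ∈ distGens S j, w = h x}) = r

/-- Restriction `z̄₄ = (z₁, z₂, z₃, z₄)` of a state in ℝ⁵. -/
def head4 (z : Fin 5 → ℝ) : Fin 4 → ℝ := fun i => z (Fin.castLE (by norm_num) i)

/-- Restriction `z̄₃ = (z₁, z₂, z₃)` of a state in ℝ⁵. -/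
def head3 (z : Fin 5 → ℝ) : Fin 3 → ℝ := fun i => z (Fin.castLE (by norm_num) i)

/-- The partial derivative `∂F/∂zᵢ` at `z`. -/
def pd {k : ℕ} (F : (Fin k → ℝ) → ℝ) (i : Fin k) (z : Fin k → ℝ) : ℝ :=
  deriv (fun t => F (Function.update z i t)) (z i)

/-- The normal form `NF`:
`ż₁ = v₁, ż₂ = z₃, ż₃ = b₁(z̄₄) + b₂(z̄₄)v₁, ż₄ = a₁(z) + a₂(z)v₁, ż₅ = v₂`. -/
def NF (b₁ b₂ : (Fin 4 → ℝ) → ℝ) (a₁ a₂ : (Fin 5 → ℝ) → ℝ) : CAS 5 2 where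
  f z := ![0, z 2, b₁ (head4 z), a₁ z, 0]
  g := ![fun z => ![1, 0, b₂ (head4 z), a₂ z, 0], fun _ => ![0, 0, 0, 0, 1]]

/-- The normal form `NF'`:
`ż₁ = z₂, ż₂ = v₁, ż₃ = b₁(z̄₄) + b₂(z̄₄)v₁, ż₄ = a₁(z) + a₂(z)v₁, ż₅ = v₂`. -/
def NF' (b₁ b₂ : (Fin 4 → ℝ) → ℝ) (a₁ a₂ : (Fin 5 → ℝ) → ℝ) : CAS 5 2 where
  f z := ![z 1, 0, b₁ (head4 z), a₁ z, 0]
  g := ![fun z => ![0, 1, b₂ (head4 z), a₂ z, 0], fun _ => ![0, 0, 0, 0, 1]]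

/-- The normal form `NF₇`:
`ż₁ = z₂, ż₂ = z₃, ż₃ = v₁, ż₄ = a₁(z) + (z₅ - z₅₀)v₁, ż₅ = v₂`. -/
def NF7 (a₁ : (Fin 5 → ℝ) → ℝ) (z₅₀ : ℝ) : CAS 5 2 where
  f z := ![z 1, z 2, 0, a₁ z, 0]
  g := ![fun z => ![0, 0, 1, z 4 - z₅₀, 0], fun _ => ![0, 0, 0, 0, 1]]

/-- The normal form `NF''`:
`ż₁ = v₁, ż₂ = c₁(z̄₃) + c₂(z̄₃)v₁, ż₃ = b₁(z̄₄) + b₂(z̄₄)v₁,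
 ż₄ = a₁(z) + a₂(z)v₁, ż₅ = v₂`. -/
def NF'' (c₁ c₂ : (Fin 3 → ℝ) → ℝ) (b₁ b₂ : (Fin 4 → ℝ) → ℝ)
    (a₁ a₂ : (Fin 5 → ℝ) → ℝ) : CAS 5 2 where
  f z := ![0, c₁ (head3 z), b₁ (head4 z), a₁ z, 0]
  g := ![fun z => ![1, c₂ (head3 z), b₂ (head4 z), a₂ z, 0], fun _ => ![0, 0, 0, 0, 1]]

/-- The normal form `NF₁₃`:
`ż₁ = v₁, ż₂ = z₃ + z₄v₁, ż₃ = a(z̄₄) + (-z₅ + b(z̄₄))v₁,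
 ż₄ = z₅ + c(z̄₄)v₁, ż₅ = v₂`. -/
def NF13 (a b c : (Fin 4 → ℝ) → ℝ) : CAS 5 2 where
  f z := ![0, z 2, a (head4 z), z 4, 0]
  g := ![fun z => ![1, z 3, -z 4 + b (head4 z), c (head4 z), 0],
        fun _ => ![0, 0, 0, 0, 1]]

/-- The car model with steering dynamics, with state `(x, y, θ₁, θ₂, ω₂)`
(coordinates `s 0, …, s 4`) and controls `(u₁, u₂)`:
`ẋ = cos(θ₂-θ₁)cos(θ₁)u₁`, `ẏ = cos(θ₂-θ₁)sin(θ₁)u₁`, `θ̇₁ = sin(θ₂-θ₁)u₁`,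
`θ̇₂ = ω₂`, `ω̇₂ = u₂`. -/
def car : CAS 5 2 where
  f s := ![0, 0, 0, s 4, 0]
  g := ![fun s => ![Real.cos (s 3 - s 2) * Real.cos (s 2),
                    Real.cos (s 3 - s 2) * Real.sin (s 2),
                    Real.sin (s 3 - s 2), 0, 0],
        fun _ => ![0, 0, 0, 0, 1]]

/-- The open domain `cos θ₁ ≠ 0`, `cos(θ₂ - θ₁) ≠ 0`. -/
def carDom : Set (Fin 5 → ℝ) := {s | Real.cos (s 2) ≠ 0 ∧ Real.cos (s 3 - s 2) ≠ 0}

/-- `z₃ = tan θ₁`. -/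
def carZ3 (s : Fin 5 → ℝ) : ℝ := Real.tan (s 2)

/-- `z₄ = tan(θ₂ - θ₁)/cos³θ₁`. -/
def carZ4 (s : Fin 5 → ℝ) : ℝ := Real.tan (s 3 - s 2) / (Real.cos (s 2)) ^ 3

/-- The new control `v₁ = cos(θ₂ - θ₁)cos(θ₁)u₁`. -/
def carV1 (s : Fin 5 → ℝ) (u : Fin 2 → ℝ) : ℝ :=
  Real.cos (s 3 - s 2) * Real.cos (s 2) * u 0

/-!
The slopes `z₃` and `z₄` determine the angles `θ₁` and `θ₂ - θ₁` once it is known between which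
consecutive zeros of the cosine these angles lie. On such a product of branches,
`z = (x, y, z₃, z₄, z₅)` with `z₅ = ω₂ / (cos² (θ₂ - θ₁) cos³ θ₁)` is a diffeomorphism onto all of
`ℝ⁵`, and `cos θ₁` is a smooth function of `z₃`. Along the car `z₅` is the part of `ż₄` free of
`v₁`, and `ż₅` is affine in `u₂` with nonvanishing slope, so that `(v₁, v₂) = (v₁, ż₅)` is an
invertible feedback.
-/

section TanBranch

open Real

/-- The interval of angles around `kπ` on which the tangent is a diffeomorphism onto `ℝ`. -/
def tanBranch (k : ℤ) : Set ℝ := {θ | θ - k * π ∈ Set.Ioo (-(π / 2)) (π / 2)}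

/-- The inverse of the tangent with values in `tanBranch k`. -/
def arctanBranch (k : ℤ) (y : ℝ) : ℝ := arctan y + k * π

/-- The cosine of the angle in `tanBranch k` with a given tangent. -/
def cosOfTan (k : ℤ) (y : ℝ) : ℝ := cos (arctanBranch k y)

theorem isOpen_tanBranch (k : ℤ) : IsOpen (tanBranch k) :=
  isOpen_Ioo.preimage (continuous_id.sub continuous_const)

theorem arctanBranch_mem_tanBranch (k : ℤ) (y : ℝ) : arctanBranch k y ∈ tanBranch k := by
  simpa only [tanBranch, arctanBranch, Set.mem_ofPred_eq, add_sub_cancel_right]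
    using arctan_mem_Ioo y

theorem tan_arctanBranch (k : ℤ) (y : ℝ) : tan (arctanBranch k y) = y := by
  rw [arctanBranch, tan_add_int_mul_pi, tan_arctan]

theorem arctanBranch_tan {k : ℤ} {θ : ℝ} (hθ : θ ∈ tanBranch k) :
    arctanBranch k (tan θ) = θ := by
  rw [arctanBranch, ← tan_sub_int_mul_pi θ k, arctan_tan hθ.1 hθ.2, sub_add_cancel]

theorem cosOfTan_tan {k : ℤ} {θ : ℝ} (hθ : θ ∈ tanBranch k) : cosOfTan k (tan θ) = cos θ := by
  rw [cosOfTan, arctanBranch_tan hθ]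

theorem cos_ne_zero_of_mem_tanBranch {k : ℤ} {θ : ℝ} (hθ : θ ∈ tanBranch k) : cos θ ≠ 0 := by
  have hpos : 0 < cos (θ - k * π) := cos_pos_of_mem_Ioo hθ
  rw [cos_sub_int_mul_pi] at hpos
  exact right_ne_zero_of_mul hpos.ne'

theorem exists_mem_tanBranch {θ : ℝ} (hθ : cos θ ≠ 0) : ∃ k, θ ∈ tanBranch k := by
  obtain ⟨k, hk, -⟩ := existsUnique_sub_zsmul_mem_Ioc pi_pos θ (-(π / 2))
  rw [zsmul_eq_mul, show -(π / 2) + π = π / 2 by ring] at hk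
  refine ⟨k, hk.1, hk.2.lt_of_ne fun h => hθ ?_⟩
  rw [show θ = π / 2 + k * π by linarith, cos_add_int_mul_pi, cos_pi_div_two, mul_zero]

theorem cosOfTan_ne_zero (k : ℤ) (y : ℝ) : cosOfTan k y ≠ 0 :=
  cos_ne_zero_of_mem_tanBranch (arctanBranch_mem_tanBranch k y)

variable {r : WithTop ℕ∞}

@[fun_prop]
theorem contDiff_arctanBranch (k : ℤ) : ContDiff ℝ r (arctanBranch k) :=
  contDiff_arctan.add contDiff_const

@[fun_prop]
theorem contDiff_cosOfTan (k : ℤ) : ContDiff ℝ r (cosOfTan k) :=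
  (contDiff_arctanBranch k).cos

theorem contDiffOn_tan_comp {E : Type*} [NormedAddCommGroup E] [NormedSpace ℝ E] {X : Set E}
    {θ : E → ℝ} (hθ : ContDiffOn ℝ r θ X) (hcos : ∀ x ∈ X, cos (θ x) ≠ 0) :
    ContDiffOn ℝ r (fun x => tan (θ x)) X := fun x hx =>
  (contDiffAt_tan.mpr (hcos x hx)).comp_contDiffWithinAt x (hθ x hx)

theorem hasDerivAt_tan_comp {θ : ℝ → ℝ} {θ' t : ℝ} (hθ : HasDerivAt θ θ' t)
    (hcos : cos (θ t) ≠ 0) :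
    HasDerivAt (fun τ => tan (θ τ)) (θ' / cos (θ t) ^ 2) t :=
  ((hasDerivAt_tan hcos).comp t hθ).congr_deriv (by ring)

end TanBranch

theorem LocallySFEThrough.mono {S S' : CAS n m} {X : Set (Fin n → ℝ)} {x₀ z₀ : Fin n → ℝ}
    {P Q : Set (Fin n → ℝ) → ((Fin n → ℝ) → Fin n → ℝ) → Prop}
    (h : LocallySFEThrough S S' X x₀ z₀ P) (hPQ : ∀ U ψ, P U ψ → Q U ψ) :
    LocallySFEThrough S S' X x₀ z₀ Q := by
  obtain ⟨U, ψ, ψinv, α, β, hU, hx₀, hUX, hz₀, hψ, hopen, hψinv, hinv, hα, hβ, hdet, hconj, hP⟩ := h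
  exact ⟨U, ψ, ψinv, α, β, hU, hx₀, hUX, hz₀, hψ, hopen, hψinv, hinv, hα, hβ, hdet, hconj,
    hPQ U ψ hP⟩

/-- The normal form `NF''₉` with `c₁ ≡ 0` and `b₁ ≡ 0` whose coefficient `a₂` depends on
`(z₃, z₄)` only. -/
abbrev carNF (a₂ : (Fin 2 → ℝ) → ℝ) : CAS 5 2 :=
  NF'' (fun _ => 0) (fun w => w 2) (fun _ => 0) (fun w => w 3)
    (fun z => z 4) (fun z => a₂ ![z 2, z 3])

theorem carNF_vf (a₂ : (Fin 2 → ℝ) → ℝ) (z : Fin 5 → ℝ) (v : Fin 2 → ℝ) :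
    (carNF a₂).vf z v =
      ![v 0, z 2 * v 0, z 3 * v 0, z 4 + a₂ ![z 2, z 3] * v 0, v 1] := by
  ext i
  fin_cases i <;> simp [CAS.vf, NF'', head3, head4, mul_comm]

theorem car_vf (s : Fin 5 → ℝ) (u : Fin 2 → ℝ) :
    car.vf s u = ![Real.cos (s 3 - s 2) * Real.cos (s 2) * u 0,
      Real.cos (s 3 - s 2) * Real.sin (s 2) * u 0, Real.sin (s 3 - s 2) * u 0, s 4, u 1] := by
  ext i
  fin_cases i <;> simp [CAS.vf, car, mul_comm]

/-- The states of the car with `θ₁` in the `k`-th and `θ₂ - θ₁` in the `l`-th branch of the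
tangent: a domain on which `carCoord` is a diffeomorphism. -/
def carChart (k l : ℤ) : Set (Fin 5 → ℝ) := {s | s 2 ∈ tanBranch k ∧ s 3 - s 2 ∈ tanBranch l}

/-- The coordinate `z₅ = ω₂ / (cos² (θ₂ - θ₁) cos³ θ₁)`. -/
def carZ5 (s : Fin 5 → ℝ) : ℝ := s 4 / (Real.cos (s 3 - s 2) ^ 2 * Real.cos (s 2) ^ 3)

/-- The normalizing coordinates `z = (x, y, z₃, z₄, z₅)` of the car. -/
def carCoord (s : Fin 5 → ℝ) : Fin 5 → ℝ := ![s 0, s 1, carZ3 s, carZ4 s, carZ5 s]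

/-- The inverse of `carCoord` with values in `carChart k l`. -/
def carCoordInv (k l : ℤ) (z : Fin 5 → ℝ) : Fin 5 → ℝ :=
  let θ₁ := arctanBranch k (z 2)
  let δ := arctanBranch l (z 3 * cosOfTan k (z 2) ^ 3)
  ![z 0, z 1, θ₁, δ + θ₁, z 4 * (Real.cos δ ^ 2 * Real.cos θ₁ ^ 3)]

/-- The coefficient `a₁(z₃, z₄, ω₂)` of `ż₄` on the charts with `θ₁` in the `k`-th branch. -/
def carA1 (k : ℤ) (w : Fin 3 → ℝ) : ℝ :=
  w 2 * (1 + (w 1 * cosOfTan k (w 0) ^ 3) ^ 2) / cosOfTan k (w 0) ^ 3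

/-- The coefficient `a₂(z₃, z₄)` of `v₁` in `ż₄` on the charts with `θ₁` in the `k`-th branch. -/
def carA2 (k : ℤ) (w : Fin 2 → ℝ) : ℝ :=
  3 * w 0 * w 1 ^ 2 * cosOfTan k (w 0) ^ 2
    - w 1 * (1 + (w 1 * cosOfTan k (w 0) ^ 3) ^ 2) / cosOfTan k (w 0)

/-- The new control `v₂`, equal to `ż₅` along the car. -/
def carV2 (s : Fin 5 → ℝ) (u : Fin 2 → ℝ) : ℝ :=
  (u 1 + s 4 * (2 * Real.tan (s 3 - s 2) * (s 4 - Real.sin (s 3 - s 2) * u 0)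
      + 3 * Real.tan (s 2) * (Real.sin (s 3 - s 2) * u 0)))
    / (Real.cos (s 3 - s 2) ^ 2 * Real.cos (s 2) ^ 3)

/-- The drift part `α` of the feedback `u = α + βv` that solves `v = (carV1 s u, carV2 s u)`
for `u`. -/
def carAlpha (s : Fin 5 → ℝ) : Fin 2 → ℝ := ![0, -(2 * Real.tan (s 3 - s 2) * s 4 ^ 2)]

/-- The input matrix `β` of the feedback `u = α + βv` that solves `v = (carV1 s u, carV2 s u)`
for `u`. -/
def carBeta (s : Fin 5 → ℝ) : Fin 2 → Fin 2 → ℝ :=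
  ![![1 / (Real.cos (s 3 - s 2) * Real.cos (s 2)), 0],
    ![-(s 4 * (3 * Real.tan (s 2) - 2 * Real.tan (s 3 - s 2)) * Real.tan (s 3 - s 2)
        / Real.cos (s 2)),
      Real.cos (s 3 - s 2) ^ 2 * Real.cos (s 2) ^ 3]]

theorem isOpen_carDom : IsOpen carDom :=
  (isOpen_ne_fun (by fun_prop) continuous_const).inter
    (isOpen_ne_fun (by fun_prop) continuous_const)

theorem isOpen_carChart (k l : ℤ) : IsOpen (carChart k l) := by
  have hheading : IsOpen {s : Fin 5 → ℝ | s 2 ∈ tanBranch k} :=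
    (isOpen_tanBranch k).preimage (by fun_prop)
  have hsteering : IsOpen {s : Fin 5 → ℝ | s 3 - s 2 ∈ tanBranch l} :=
    (isOpen_tanBranch l).preimage (by fun_prop)
  exact hheading.inter hsteering

theorem carChart_subset_carDom (k l : ℤ) : carChart k l ⊆ carDom := fun _ hs =>
  ⟨cos_ne_zero_of_mem_tanBranch hs.1, cos_ne_zero_of_mem_tanBranch hs.2⟩

theorem exists_mem_carChart {s : Fin 5 → ℝ} (hs : s ∈ carDom) : ∃ k l, s ∈ carChart k l := by
  obtain ⟨k, hk⟩ := exists_mem_tanBranch hs.1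
  obtain ⟨l, hl⟩ := exists_mem_tanBranch hs.2
  exact ⟨k, l, hk, hl⟩

section Smoothness

variable {r : WithTop ℕ∞}

theorem contDiff_carA1 (k : ℤ) : ContDiff ℝ r (carA1 k) :=
  ContDiff.div (by fun_prop) (by fun_prop) fun w => pow_ne_zero 3 (cosOfTan_ne_zero k (w 0))

theorem contDiff_carA2 (k : ℤ) : ContDiff ℝ r (carA2 k) :=
  ContDiff.sub (by fun_prop)
    (ContDiff.div (by fun_prop) (by fun_prop) fun w => cosOfTan_ne_zero k (w 0))

theorem contDiffOn_tan_heading :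
    ContDiffOn ℝ r (fun s : Fin 5 → ℝ => Real.tan (s 2)) carDom :=
  contDiffOn_tan_comp (by fun_prop) fun _ hs => hs.1

theorem contDiffOn_tan_steering :
    ContDiffOn ℝ r (fun s : Fin 5 → ℝ => Real.tan (s 3 - s 2)) carDom :=
  contDiffOn_tan_comp (by fun_prop) fun _ hs => hs.2

theorem contDiffOn_carCoord : ContDiffOn ℝ r carCoord carDom := by
  have hZ4 : ContDiffOn ℝ r carZ4 carDom :=
    contDiffOn_tan_steering.div (by fun_prop) fun _ hs => pow_ne_zero 3 hs.1
  have hZ5 : ContDiffOn ℝ r carZ5 carDom :=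
    ContDiffOn.div (by fun_prop) (by fun_prop) fun _ hs =>
      mul_ne_zero (pow_ne_zero 2 hs.2) (pow_ne_zero 3 hs.1)
  refine contDiffOn_pi.mpr fun i => ?_
  fin_cases i
  exacts [(contDiff_apply ℝ ℝ 0).contDiffOn, (contDiff_apply ℝ ℝ 1).contDiffOn,
    contDiffOn_tan_heading, hZ4, hZ5]

theorem contDiff_carCoordInv (k l : ℤ) : ContDiff ℝ r (carCoordInv k l) := by
  refine contDiff_pi.mpr fun i => ?_
  fin_cases i <;> simp only [carCoordInv, Fin.reduceFinMk, Fin.zero_eta, Fin.mk_one,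
    Matrix.cons_val] <;> fun_prop

theorem contDiffOn_carAlpha : ContDiffOn ℝ r carAlpha carDom := by
  have hsteer := contDiffOn_tan_steering (r := r)
  refine contDiffOn_pi.mpr fun i => ?_
  fin_cases i <;> simp only [carAlpha, Fin.zero_eta, Fin.mk_one, Matrix.cons_val_zero,
    Matrix.cons_val_one] <;> fun_prop

theorem contDiffOn_carBeta : ContDiffOn ℝ r carBeta carDom := by
  have hhead := contDiffOn_tan_heading (r := r)
  have hsteer := contDiffOn_tan_steering (r := r)
  refine contDiffOn_pi.mpr fun i => contDiffOn_pi.mpr fun j => ?_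
  fin_cases i <;> fin_cases j <;> simp only [carBeta, Fin.zero_eta, Fin.mk_one,
    Matrix.cons_val_zero, Matrix.cons_val_one]
  · exact ContDiffOn.div (by fun_prop) (by fun_prop) fun _ hs => mul_ne_zero hs.2 hs.1
  · fun_prop
  · exact (ContDiffOn.div (by fun_prop) (by fun_prop) fun _ hs => hs.1).neg
  · fun_prop

end Smoothness

section Chart

variable {k l : ℤ}

theorem carA1_apply_coord {s : Fin 5 → ℝ} (hs : s ∈ carChart k l) :
    carA1 k ![carZ3 s, carZ4 s, s 4] = carZ5 s := by
  obtain ⟨hθ, hδ⟩ := carChart_subset_carDom k l hs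
  have hT := Real.inv_one_add_tan_sq hδ
  simp only [carA1, carZ3, carZ4, carZ5, Matrix.cons_val, cosOfTan_tan hs.1, ← hT]
  field_simp

theorem carCoordInv_mem_carChart (k l : ℤ) (z : Fin 5 → ℝ) : carCoordInv k l z ∈ carChart k l := by
  simp only [carChart, carCoordInv, Set.mem_ofPred_eq, Matrix.cons_val, add_sub_cancel_right]
  exact ⟨arctanBranch_mem_tanBranch k _, arctanBranch_mem_tanBranch l _⟩

theorem carCoordInv_carCoord {s : Fin 5 → ℝ} (hs : s ∈ carChart k l) :
    carCoordInv k l (carCoord s) = s := by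
  obtain ⟨hθ, hδ⟩ := carChart_subset_carDom k l hs
  have hT : carZ4 s * Real.cos (s 2) ^ 3 = Real.tan (s 3 - s 2) :=
    div_mul_cancel₀ _ (pow_ne_zero 3 hθ)
  ext i
  fin_cases i <;> simp only [carCoordInv, carCoord, carZ3, Fin.reduceFinMk, Fin.zero_eta,
    Fin.mk_one, Matrix.cons_val, cosOfTan_tan hs.1, hT, arctanBranch_tan hs.1,
    arctanBranch_tan hs.2, sub_add_cancel]
  exact div_mul_cancel₀ _ (mul_ne_zero (pow_ne_zero 2 hδ) (pow_ne_zero 3 hθ))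

theorem carCoord_carCoordInv (k l : ℤ) (z : Fin 5 → ℝ) : carCoord (carCoordInv k l z) = z := by
  have hθ : Real.cos (arctanBranch k (z 2)) ≠ 0 := cosOfTan_ne_zero k (z 2)
  have hδ : Real.cos (arctanBranch l (z 3 * cosOfTan k (z 2) ^ 3)) ≠ 0 := cosOfTan_ne_zero l _
  ext i
  fin_cases i <;> simp only [carCoordInv, carCoord, carZ3, carZ4, carZ5, Fin.reduceFinMk,
    Fin.zero_eta, Fin.mk_one, Matrix.cons_val, add_sub_cancel_right, tan_arctanBranch]
  · exact mul_div_cancel_right₀ _ (pow_ne_zero 3 hθ)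
  · exact mul_div_cancel_right₀ _ (mul_ne_zero (pow_ne_zero 2 hδ) (pow_ne_zero 3 hθ))

theorem image_carCoord_carChart (k l : ℤ) : carCoord '' carChart k l = Set.univ :=
  Set.eq_univ_of_forall fun z =>
    ⟨carCoordInv k l z, carCoordInv_mem_carChart k l z, carCoord_carCoordInv k l z⟩

end Chart

section Velocity

variable {s : ℝ → Fin 5 → ℝ} {u : Fin 2 → ℝ} {t : ℝ} {k l : ℤ}

theorem hasDerivAt_heading (hs : HasDerivAt s (car.vf (s t) u) t) :
    HasDerivAt (fun τ => s τ 2) (Real.sin (s t 3 - s t 2) * u 0) t :=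
  (hasDerivAt_pi.mp hs 2).congr_deriv (by simp only [car_vf, Matrix.cons_val])

theorem hasDerivAt_steering (hs : HasDerivAt s (car.vf (s t) u) t) :
    HasDerivAt (fun τ => s τ 3 - s τ 2) (s t 4 - Real.sin (s t 3 - s t 2) * u 0) t :=
  ((hasDerivAt_pi.mp hs 3).fun_sub (hasDerivAt_heading hs)).congr_deriv
    (by simp only [car_vf, Matrix.cons_val])

theorem hasDerivAt_carX (hs : HasDerivAt s (car.vf (s t) u) t) :
    HasDerivAt (fun τ => s τ 0) (carV1 (s t) u) t :=
  (hasDerivAt_pi.mp hs 0).congr_deriv (by simp only [car_vf, carV1, Matrix.cons_val])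

theorem hasDerivAt_carY (hd : s t ∈ carDom) (hs : HasDerivAt s (car.vf (s t) u) t) :
    HasDerivAt (fun τ => s τ 1) (carZ3 (s t) * carV1 (s t) u) t := by
  refine (hasDerivAt_pi.mp hs 1).congr_deriv ?_
  simp only [car_vf, carZ3, carV1, Matrix.cons_val, ← Real.tan_mul_cos hd.1]
  ring

theorem hasDerivAt_carZ3 (hd : s t ∈ carDom) (hs : HasDerivAt s (car.vf (s t) u) t) :
    HasDerivAt (fun τ => carZ3 (s τ)) (carZ4 (s t) * carV1 (s t) u) t := by
  have ⟨hθ, hδ⟩ := hd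
  refine (hasDerivAt_tan_comp (hasDerivAt_heading hs) hθ).congr_deriv ?_
  simp only [carZ4, carV1, ← Real.tan_mul_cos hδ]
  field_simp

theorem hasDerivAt_carZ4 (hk : s t ∈ carChart k l) (hs : HasDerivAt s (car.vf (s t) u) t) :
    HasDerivAt (fun τ => carZ4 (s τ))
      (carZ5 (s t) + carA2 k ![carZ3 (s t), carZ4 (s t)] * carV1 (s t) u) t := by
  obtain ⟨hθ, hδ⟩ := carChart_subset_carDom k l hk
  refine ((hasDerivAt_tan_comp (hasDerivAt_steering hs) hδ).fun_div
    ((hasDerivAt_heading hs).cos.fun_pow 3) (pow_ne_zero 3 hθ)).congr_deriv ?_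
  have hT : 1 + Real.tan (s t 3 - s t 2) ^ 2 = (Real.cos (s t 3 - s t 2) ^ 2)⁻¹ := by
    rw [← Real.inv_one_add_tan_sq hδ, inv_inv]
  simp only [carZ5, carA2, carZ3, carZ4, carV1, Matrix.cons_val_zero, Matrix.cons_val_one,
    cosOfTan_tan hk.1, div_mul_cancel₀ _ (pow_ne_zero 3 hθ), hT, ← Real.tan_mul_cos hθ,
    ← Real.tan_mul_cos hδ]
  field_simp
  ring

theorem hasDerivAt_carZ5 (hd : s t ∈ carDom) (hs : HasDerivAt s (car.vf (s t) u) t) :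
    HasDerivAt (fun τ => carZ5 (s τ)) (carV2 (s t) u) t := by
  have ⟨hθ, hδ⟩ := hd
  have hω : HasDerivAt (fun τ => s τ 4) (u 1) t :=
    (hasDerivAt_pi.mp hs 4).congr_deriv (by simp only [car_vf, Matrix.cons_val])
  refine (hω.fun_div (((hasDerivAt_steering hs).cos.fun_pow 2).fun_mul
    ((hasDerivAt_heading hs).cos.fun_pow 3))
    (mul_ne_zero (pow_ne_zero 2 hδ) (pow_ne_zero 3 hθ))).congr_deriv ?_
  simp only [carV2, Real.tan_eq_sin_div_cos]
  field_simp
  ring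

theorem hasDerivAt_carCoord (hk : s t ∈ carChart k l) (hs : HasDerivAt s (car.vf (s t) u) t) :
    HasDerivAt (fun τ => carCoord (s τ))
      ((carNF (carA2 k)).vf (carCoord (s t)) ![carV1 (s t) u, carV2 (s t) u]) t := by
  have hd := carChart_subset_carDom k l hk
  rw [carNF_vf, hasDerivAt_pi]
  intro i
  fin_cases i <;> simp only [carCoord, Fin.reduceFinMk, Fin.zero_eta, Fin.mk_one, Matrix.cons_val]
  exacts [hasDerivAt_carX hs, hasDerivAt_carY hd hs, hasDerivAt_carZ3 hd hs,
    hasDerivAt_carZ4 hk hs, hasDerivAt_carZ5 hd hs]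

end Velocity

section NormalForm

variable {s : Fin 5 → ℝ} {k l : ℤ}

theorem fderiv_carCoord_vf (hs : s ∈ carChart k l) (u : Fin 2 → ℝ) :
    fderiv ℝ carCoord s (car.vf s u) =
      (carNF (carA2 k)).vf (carCoord s) ![carV1 s u, carV2 s u] := by
  have hdiff : DifferentiableAt ℝ carCoord s :=
    (contDiffOn_carCoord.contDiffAt
      (isOpen_carDom.mem_nhds (carChart_subset_carDom k l hs))).differentiableAt one_ne_zero
  have hline : HasDerivAt (fun τ : ℝ => s + τ • car.vf s u) (car.vf s u) 0 := by
    simpa using ((hasDerivAt_id (0 : ℝ)).smul_const (car.vf s u)).const_add s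
  have h₀ : s + (0 : ℝ) • car.vf s u = s := by rw [zero_smul, add_zero]
  have hcoord := hasDerivAt_carCoord (s := fun τ : ℝ => s + τ • car.vf s u) (u := u) (t := 0)
    (by rwa [h₀]) (by rwa [h₀])
  simp only [h₀] at hcoord
  rw [← hdiff.lineDeriv_eq_fderiv, HasLineDerivAt.lineDeriv hcoord]

theorem carV1_feedback (hs : s ∈ carDom) (v : Fin 2 → ℝ) :
    carV1 s (fun i => carAlpha s i + ∑ j, carBeta s i j * v j) = v 0 := by
  obtain ⟨hθ, hδ⟩ := hs
  simp only [carV1, carAlpha, carBeta, Fin.sum_univ_two, Matrix.cons_val_zero, Matrix.cons_val_one]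
  field_simp
  ring

theorem carV2_feedback (hs : s ∈ carDom) (v : Fin 2 → ℝ) :
    carV2 s (fun i => carAlpha s i + ∑ j, carBeta s i j * v j) = v 1 := by
  obtain ⟨hθ, hδ⟩ := hs
  simp only [carV2, carAlpha, carBeta, Fin.sum_univ_two, Matrix.cons_val_zero, Matrix.cons_val_one,
    ← Real.tan_mul_cos hδ]
  field_simp
  ring

theorem det_carBeta_ne_zero (hs : s ∈ carDom) : (Matrix.of (carBeta s)).det ≠ 0 := by
  obtain ⟨hθ, hδ⟩ := hs
  simp only [Matrix.det_fin_two, Matrix.of_apply, carBeta, Matrix.cons_val_zero,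
    Matrix.cons_val_one, zero_mul, sub_zero]
  positivity

theorem car_locallySFEThrough_carNF (hs : s ∈ carChart k l) :
    LocallySFEThrough car (carNF (carA2 k)) carDom s (carCoord s)
      (fun U ψ => U = carChart k l ∧ ψ = carCoord) := by
  have hU := carChart_subset_carDom k l
  refine ⟨carChart k l, carCoord, carCoordInv k l, carAlpha, carBeta, isOpen_carChart k l, hs, hU,
    rfl, contDiffOn_carCoord.mono hU, ?_, (contDiff_carCoordInv k l).contDiffOn,
    fun x hx => carCoordInv_carCoord hx, contDiffOn_carAlpha.mono hU, contDiffOn_carBeta.mono hU,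
    fun x hx => det_carBeta_ne_zero (hU hx), fun x hx v => ?_, rfl, rfl⟩
  · exact image_carCoord_carChart k l ▸ isOpen_univ
  · have hv : ![v 0, v 1] = v := by
      ext i
      fin_cases i <;> rfl
    rw [fderiv_carCoord_vf hx, carV1_feedback (hU hx), carV2_feedback (hU hx), hv]

end NormalForm

theorem statement18_general :
    (∀ (s : ℝ → Fin 5 → ℝ) (u : Fin 2 → ℝ) (t : ℝ), s t ∈ carDom →
      HasDerivAt s (car.vf (s t) u) t →
      HasDerivAt (fun τ => s τ 0) (carV1 (s t) u) t ∧
      HasDerivAt (fun τ => s τ 1) (carZ3 (s t) * carV1 (s t) u) t ∧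
      HasDerivAt (fun τ => carZ3 (s τ)) (carZ4 (s t) * carV1 (s t) u) t) ∧
    ∀ s₀ ∈ carDom, ∃ (U : Set (Fin 5 → ℝ)) (a₁ : (Fin 3 → ℝ) → ℝ) (a₂ : (Fin 2 → ℝ) → ℝ)
      (z₀ : Fin 5 → ℝ),
      IsOpen U ∧ s₀ ∈ U ∧ U ⊆ carDom ∧
      ContDiff ℝ (⊤ : ℕ∞) a₁ ∧ ContDiff ℝ (⊤ : ℕ∞) a₂ ∧
      (∀ (s : ℝ → Fin 5 → ℝ) (u : Fin 2 → ℝ) (t : ℝ), s t ∈ U →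
        HasDerivAt s (car.vf (s t) u) t →
        HasDerivAt (fun τ => carZ4 (s τ))
          (a₁ ![carZ3 (s t), carZ4 (s t), s t 4]
            + a₂ ![carZ3 (s t), carZ4 (s t)] * carV1 (s t) u) t) ∧
      LocallySFEThrough car (carNF a₂) carDom s₀ z₀ (fun V ψ => V = U ∧
        ∀ s ∈ U, ψ s = ![s 0, s 1, carZ3 s, carZ4 s, a₁ ![carZ3 s, carZ4 s, s 4]]) := by
  refine ⟨fun s u t hd hs => ⟨hasDerivAt_carX hs, hasDerivAt_carY hd hs, hasDerivAt_carZ3 hd hs⟩,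
    fun s₀ hs₀ => ?_⟩
  obtain ⟨k, l, hkl⟩ := exists_mem_carChart hs₀
  refine ⟨carChart k l, carA1 k, carA2 k, carCoord s₀, isOpen_carChart k l, hkl,
    carChart_subset_carDom k l, contDiff_carA1 k, contDiff_carA2 k, fun s u t hk hs => ?_, ?_⟩
  · rw [carA1_apply_coord hk]
    exact hasDerivAt_carZ4 hk hs
  · refine (car_locallySFEThrough_carNF hkl).mono ?_
    rintro _ _ ⟨rfl, rfl⟩
    exact ⟨rfl, fun s hs => by rw [carA1_apply_coord hs, carCoord]⟩

/-- **Example 5.2 (car with steering dynamics).** With `z₁ = x`, `z₂ = y`,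
`z₃ = tan θ₁`, `z₄ = tan(θ₂-θ₁)/cos³θ₁` and `v₁ = cos(θ₂-θ₁)cos(θ₁)u₁`: along
every trajectory `ż₁ = v₁`, `ż₂ = z₃v₁`, `ż₃ = z₄v₁`; there are smooth
functions `a₁(z₃,z₄,ω₂)` and `a₂(z₃,z₄)` with `ż₄ = a₁(z₃,z₄,ω₂) +
a₂(z₃,z₄)v₁`; and, after introducing `z₅ = a₁(z₃,z₄,ω₂)` and a suitable
invertible static feedback, the system takes the normal form `NF''₉`
(with `c₁ ≡ 0` and `b₁ ≡ 0`), compatibly with the minimal x-flat output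
`φ = (x, y) = (z₁, z₂)`. -/
theorem statement18 :
    -- (1) ż₁ = v₁, ż₂ = z₃v₁, ż₃ = z₄v₁ along every trajectory in the domain
    (∀ (s : ℝ → Fin 5 → ℝ) (u : ℝ → Fin 2 → ℝ), ContDiff ℝ (⊤ : ℕ∞) u →
      car.IsTrajOn carDom s u → ∀ t,
      HasDerivAt (fun τ => s τ 0) (carV1 (s t) (u t)) t ∧
      HasDerivAt (fun τ => s τ 1) (carZ3 (s t) * carV1 (s t) (u t)) t ∧
      HasDerivAt (fun τ => carZ3 (s τ)) (carZ4 (s t) * carV1 (s t) (u t)) t) ∧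
    -- (2) local existence of smooth a₁(z₃, z₄, ω₂) and a₂(z₃, z₄) with
    --     ż₄ = a₁(z₃,z₄,ω₂) + a₂(z₃,z₄)v₁
    (∀ s₀ ∈ carDom, ∃ (U : Set (Fin 5 → ℝ)) (A₁ : Set (Fin 3 → ℝ))
      (A₂ : Set (Fin 2 → ℝ)) (a₁ : (Fin 3 → ℝ) → ℝ) (a₂ : (Fin 2 → ℝ) → ℝ),
      IsOpen U ∧ s₀ ∈ U ∧ U ⊆ carDom ∧ IsOpen A₁ ∧ IsOpen A₂ ∧
      ContDiffOn ℝ (⊤ : ℕ∞) a₁ A₁ ∧ ContDiffOn ℝ (⊤ : ℕ∞) a₂ A₂ ∧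
      (∀ s ∈ U, (![carZ3 s, carZ4 s, s 4] : Fin 3 → ℝ) ∈ A₁) ∧
      (∀ s ∈ U, (![carZ3 s, carZ4 s] : Fin 2 → ℝ) ∈ A₂) ∧
      ∀ (s : ℝ → Fin 5 → ℝ) (u : ℝ → Fin 2 → ℝ), ContDiff ℝ (⊤ : ℕ∞) u →
        car.IsTrajOn U s u → ∀ t,
        HasDerivAt (fun τ => carZ4 (s τ))
          (a₁ ![carZ3 (s t), carZ4 (s t), s t 4]
            + a₂ ![carZ3 (s t), carZ4 (s t)] * carV1 (s t) (u t)) t) ∧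
    -- (3) static feedback equivalence to NF''₉ (with c₁ ≡ 0 and b₁ ≡ 0),
    --     compatibly with the flat output φ = (x, y)
    (∀ s₀ ∈ carDom, ∃ (A2 : (Fin 2 → ℝ) → ℝ) (z₀ : Fin 5 → ℝ),
      LocallySFEThrough car
        (NF'' (fun _ => 0) (fun w => w 2) (fun _ => 0) (fun w => w 3)
          (fun z => z 4) (fun z => A2 ![z 2, z 3]))
        carDom s₀ z₀
        (fun U ψ => ∀ s ∈ U, ψ s 0 = s 0 ∧ ψ s 1 = s 1)) := by
  refine ⟨fun s u _ hs t => statement18_general.1 s (u t) t (hs.1 t) (hs.2 t), ?_, ?_⟩ <;>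
    intro s₀ hs₀ <;>
    obtain ⟨U, a₁, a₂, z₀, hU, h₀, hUd, ha₁, ha₂, hz₄, hsfe⟩ := statement18_general.2 s₀ hs₀
  · exact ⟨U, Set.univ, Set.univ, a₁, a₂, hU, h₀, hUd, isOpen_univ, isOpen_univ, ha₁.contDiffOn,
      ha₂.contDiffOn, fun _ _ => trivial, fun _ _ => trivial,
      fun s u _ hs t => hz₄ s (u t) t (hs.1 t) (hs.2 t)⟩
  · refine ⟨a₂, z₀, hsfe.mono ?_⟩
    rintro _ ψ ⟨rfl, hψ⟩ s hs
    exact ⟨congrFun (hψ s hs) 0, congrFun (hψ s hs) 1⟩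

end ControlAffine
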